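/- Consider P(Z; M, β) = (Z−1)³·(Z²+3Z+6)/60 + (M/9)·(5Z²−16Z+20) + (β/2)·(Z−1)². For every M > 0 and β ∈ ℝ, the polynomial Z ↦ P(Z; M, β) has exactly one root Z₀(M, β) in the half-line {Z ≤ 1}. Moreover, there exists a constant c₀ > 0, independent of M and β, such that for all M > 0 and β ∈ ℝ, if Z₀(M, β) ≥ −1 then ∂P/∂Z(Z₀(M, β); M, β) ≥ c₀·max{M^{2/3}, M}. -/

import Mathlib

/-- The fifth-order polynomial `P(Z; M, β)` solving `P''' = Z²` with `P(1; M, β) = M`. -/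
noncomputable def P (M β Z : ℝ) : ℝ :=
  (Z - 1) ^ 3 * (Z ^ 2 + 3 * Z + 6) / 60 + (M / 9) * (5 * Z ^ 2 - 16 * Z + 20)
    + (β / 2) * (Z - 1) ^ 2

theorem P_eq (M β w : ℝ) : P M β (1 - w) =
    -(w ^ 3 * (w ^ 2 - 5 * w + 10)) / 60 + M * (1 + 2 * w / 3 + 5 * w ^ 2 / 9)
      + β * w ^ 2 / 2 := by
  unfold P; ring

theorem P_uniq (M β a b : ℝ) (hM : 0 < M) (ha : 0 ≤ a) (hab : a < b)
    (h1 : P M β (1 - a) = 0) (h2 : P M β (1 - b) = 0) : False := by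
  rw [P_eq] at h1 h2
  have hd : 0 < b - a := by linarith
  have hq : 0 ≤ a ^ 2 + a * b + b ^ 2 - 5 * (a + b) + 10 := by
    nlinarith [sq_nonneg (a - b), sq_nonneg (a + b - 10 / 3)]
  have e : a ^ 2 * b ^ 2 * ((b - a) * (a ^ 2 + a * b + b ^ 2 - 5 * (a + b) + 10)) / 60
      + M * ((b - a) * (b + a + 2 / 3 * (a * b))) = 0 := by
    linear_combination b ^ 2 * h1 - a ^ 2 * h2
  have hb : 0 < b := by linarith
  have : 0 < M * ((b - a) * (b + a + 2 / 3 * (a * b))) := by positivity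
  have : 0 ≤ a ^ 2 * b ^ 2 * ((b - a) * (a ^ 2 + a * b + b ^ 2 - 5 * (a + b) + 10)) / 60 := by
    positivity
  linarith

theorem P_exists (M β : ℝ) (hM : 0 < M) : ∃ Z : ℝ, Z ≤ 1 ∧ P M β Z = 0 := by
  obtain ⟨w, hw⟩ : ∃ w : ℝ, w = 1 + 20 * (3 * M + |β|) := ⟨_, rfl⟩
  have hb := abs_nonneg β
  have hb' := le_abs_self β
  have hw1 : 1 ≤ w := by linarith
  have hneg : P M β (1 - w) ≤ 0 := by
    rw [P_eq]
    have h1 : w ^ 3 * 3 ≤ w ^ 3 * (w ^ 2 - 5 * w + 10) := by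
      apply mul_le_mul_of_nonneg_left _ (by positivity)
      nlinarith [sq_nonneg (w - 5 / 2)]
    have h2 : M * (1 + 2 * w / 3 + 5 * w ^ 2 / 9) ≤ M * (3 * w ^ 2) := by
      apply mul_le_mul_of_nonneg_left _ hM.le
      nlinarith
    have h3 : β * w ^ 2 ≤ |β| * w ^ 2 := mul_le_mul_of_nonneg_right hb' (by positivity)
    have h4 : w ^ 3 = w ^ 2 * (1 + 20 * (3 * M + |β|)) := by rw [← hw]; ring
    have h5 : 0 ≤ |β| * w ^ 2 := by positivity
    nlinarith [sq_nonneg w]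
  have hpos : 0 ≤ P M β 1 := by
    unfold P; nlinarith
  have hc : ContinuousOn (P M β) (Set.Icc (1 - w) 1) := by
    unfold P; fun_prop
  obtain ⟨z, hz, hz0⟩ := intermediate_value_Icc (by linarith : 1 - w ≤ 1) hc ⟨hneg, hpos⟩
  exact ⟨z, hz.2, hz0⟩

theorem P_deriv (M β Z : ℝ) : deriv (P M β) Z =
    (3 * (Z - 1) ^ 2 * (Z ^ 2 + 3 * Z + 6) + (Z - 1) ^ 3 * (2 * Z + 3)) / 60
      + (M / 9) * (10 * Z - 16) + β * (Z - 1) := by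
  have hx := hasDerivAt_id' Z
  have h1 := (hx.sub_const 1)
  have h := ((((h1.pow 3).mul (((hx.pow 2).add (hx.const_mul 3)).add_const 6)).div_const 60).add
    ((((((hx.pow 2).const_mul 5).sub (hx.const_mul 16)).add_const 20).const_mul (M / 9)))).add
    ((h1.pow 2).const_mul (β / 2))
  have h' := h.deriv
  have e : deriv (P M β) Z = _ := h'
  rw [e]
  simp
  ring

/-- for every `M > 0` and `β ∈ ℝ`, `P(·; M, β)` has exactly one root in
`{Z ≤ 1}`; and there is a universal constant `c₀ > 0` such that whenever this root `Z₀`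
satisfies `Z₀ ≥ -1`, one has `∂P/∂Z(Z₀; M, β) ≥ c₀ · max(M^{2/3}, M)`. -/
theorem unique_root_and_derivative_bound :
    (∀ M : ℝ, 0 < M → ∀ β : ℝ, ∃! Z : ℝ, Z ≤ 1 ∧ P M β Z = 0) ∧
    (∃ c₀ : ℝ, 0 < c₀ ∧ ∀ M : ℝ, 0 < M → ∀ β Z₀ : ℝ,
      Z₀ ≤ 1 → P M β Z₀ = 0 → -1 ≤ Z₀ →
      c₀ * max (M ^ ((2 : ℝ) / 3)) M ≤ deriv (P M β) Z₀) := by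
  refine ⟨fun M hM β => ?_, 1 / 36, by norm_num, ?_⟩
  · obtain ⟨z, hz, h0⟩ := P_exists M β hM
    refine ⟨z, ⟨hz, h0⟩, ?_⟩
    rintro y ⟨hy, hy0⟩
    have hz' : P M β (1 - (1 - z)) = 0 := by rw [sub_sub_cancel]; exact h0
    have hy' : P M β (1 - (1 - y)) = 0 := by rw [sub_sub_cancel]; exact hy0
    rcases lt_trichotomy y z with h | h | h
    · exact (P_uniq M β (1 - z) (1 - y) hM (by linarith) (by linarith) hz' hy').elim
    · exact h
    · exact (P_uniq M β (1 - y) (1 - z) hM (by linarith) (by linarith) hy' hz').elim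
  · intro M hM β Z hZ h0 _
    obtain ⟨w, rfl⟩ : ∃ w, Z = 1 - w := ⟨1 - Z, by ring⟩
    have hw0 : 0 ≤ w := by linarith
    have hw : 0 < w := by
      rcases hw0.lt_or_eq with h | h
      · exact h
      · subst h
        rw [P_eq] at h0
        linarith
    rw [P_eq] at h0
    have hd : deriv (P M β) (1 - w) =
        w ^ 2 * (3 * w ^ 2 - 10 * w + 10) / 60 + 2 * M / w + 2 * M / 3 := by
      rw [P_deriv]
      field_simp
      linear_combination (-3240) * h0
    have h1 : w ^ 2 * (5 / 3) ≤ w ^ 2 * (3 * w ^ 2 - 10 * w + 10) := by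
      apply mul_le_mul_of_nonneg_left _ (by positivity)
      nlinarith [sq_nonneg (w - 5 / 3)]
    have h2 : 0 < 2 * M / w := by positivity
    have h3 : 0 ≤ w ^ 2 := by positivity
    rw [hd]
    rcases max_choice (M ^ ((2 : ℝ) / 3)) M with h | h <;> rw [h]
    · obtain ⟨s, hs⟩ : ∃ s : ℝ, s = M ^ ((1 : ℝ) / 3) := ⟨_, rfl⟩
      have hs0 : 0 < s := by rw [hs]; positivity
      have e2 : M ^ ((2 : ℝ) / 3) = s ^ 2 := by
        rw [hs, ← Real.rpow_natCast, ← Real.rpow_mul hM.le]; norm_num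
      have e3 : M = s ^ 3 := by
        rw [hs, ← Real.rpow_natCast, ← Real.rpow_mul hM.le]; norm_num
      rw [e2]
      rcases le_total s w with hsw | hsw
      · have : s ^ 2 ≤ w ^ 2 := by gcongr
        linarith
      · have : s ^ 2 ≤ 2 * M / w := by
          rw [le_div_iff₀ hw, e3]
          nlinarith [mul_le_mul_of_nonneg_left hsw (sq_nonneg s), pow_pos hs0 3]
        nlinarith [sq_nonneg s]
    · linarith
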